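/- Fix μ>0, let l ∈ {0, 1/2, 1, 3/2, …} and m,n ∈ {−l, −l+1, …, l}. Then the function φ⁺(X) = t^l_{n m̲}(X) / ((1+μ²N(X))^{1/2} + 1)^{2l+1} satisfies □̃_μ φ⁺ = 0 on all of ℝ⁴, and the function φ⁻(X) = t^l_{n m̲}(X) / ((1+μ²N(X))^{1/2} − 1)^{2l+1} satisfies □̃_μ φ⁻ = 0 on ℝ⁴∖{0}. -/

import Mathlib

noncomputable section

/-- `N(X) = (x⁰)² + (x¹)² + (x²)² + (x³)²` for `X ∈ ℝ⁴`. -/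
def Nq (X : Fin 4 → ℝ) : ℝ := ∑ i, X i ^ 2

/-- The `i`-th standard basis vector of `ℝ⁴`. -/
def e4 (i : Fin 4) : Fin 4 → ℝ := Pi.single i 1

/-- The partial derivative `∂f/∂xⁱ` of a `ℂ`-valued function on `ℝ⁴`. -/
def pd (i : Fin 4) (f : (Fin 4 → ℝ) → ℂ) (X : Fin 4 → ℝ) : ℂ := fderiv ℝ f X (e4 i)

/-- The Laplacian `□f = Σᵢ ∂²f/∂(xⁱ)²`. -/
def lap (f : (Fin 4 → ℝ) → ℂ) (X : Fin 4 → ℝ) : ℂ := ∑ i, pd i (pd i f) X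

/-- The degree operator `deg f = Σᵢ xⁱ ∂f/∂xⁱ`. -/
def degOp (f : (Fin 4 → ℝ) → ℂ) (X : Fin 4 → ℝ) : ℂ := ∑ i, (X i : ℂ) * pd i f X

/-- The conformal Laplacian `□̃_μ f = □f + μ²(deg(deg f) + 3·deg f + 2f)`. -/
def boxTilde (μ : ℝ) (f : (Fin 4 → ℝ) → ℂ) (X : Fin 4 → ℝ) : ℂ :=
  lap f X + (μ ^ 2 : ℝ) * (degOp (degOp f) X + 3 * degOp f X + 2 * f X)

/-- The matrix `Z(V) = [[v⁰−iv³, −iv¹−v²],[−iv¹+v², v⁰+iv³]]` with `det Z(V) = N(V)`. -/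
def Zmat (V : Fin 4 → ℂ) : Matrix (Fin 2) (Fin 2) ℂ :=
  !![V 0 - Complex.I * V 3, -Complex.I * V 1 - V 2;
     -Complex.I * V 1 + V 2, V 0 + Complex.I * V 3]

/-- The matrix coefficient `t^l_{n m̲}(Z)`: here `p = 2l`, `a = l−m`, `b = l−n`, and
`tcoef p a b Z` is the coefficient of `s^b` in `(s z₁₁+z₂₁)^a (s z₁₂+z₂₂)^{p−a}`. -/
def tcoef (p a b : ℕ) (Z : Matrix (Fin 2) (Fin 2) ℂ) : ℂ :=
  ((Polynomial.C (Z 0 0) * Polynomial.X + Polynomial.C (Z 1 0)) ^ a *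
   (Polynomial.C (Z 0 1) * Polynomial.X + Polynomial.C (Z 1 1)) ^ (p - a)).coeff b

/-- `t^l_{n m̲}(X)` for `X ∈ ℝ⁴`. -/
def tcoefR (p a b : ℕ) (X : Fin 4 → ℝ) : ℂ := tcoef p a b (Zmat fun i => (X i : ℂ))

/-!
Set `r = (1 + μ²N)^{1/2}` and let `T` be harmonic and homogeneous of degree `p`. The derivatives of
`r`, read off from `r² = 1 + μ²N`, give
`□̃_μ (T g(r)) = μ² T ((r² - 1) g'' + 2(p + 2) r g' + (p + 1)(p + 2) g)(r)`,
and `g(r) = (r ± 1)^{-(p+1)}` are the two elementary solutions of the resulting Gegenbauer equation.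

The coefficients `t^l_{n m̲}` are harmonic and homogeneous of degree `2l` because, by interpolation,
they are linear combinations of the values at finitely many `s` of their generating polynomial
`(s z₁₁ + z₂₁)^{l-m} (s z₁₂ + z₂₂)^{l+m}`, and each value is a product of powers of two linear forms
on `ℝ⁴` that are isotropic and orthogonal to each other.
-/

open scoped Topology

section PartialDerivatives

variable {f g : (Fin 4 → ℝ) → ℂ} {X : Fin 4 → ℝ}

lemma pd_add (i : Fin 4) (hf : DifferentiableAt ℝ f X) (hg : DifferentiableAt ℝ g X) :
    pd i (f + g) X = pd i f X + pd i g X := by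
  simp only [pd, fderiv_add hf hg, add_apply]

lemma pd_const_smul (i : Fin 4) (c : ℂ) (hf : DifferentiableAt ℝ f X) :
    pd i (c • f) X = c * pd i f X := by
  simp only [pd, fderiv_const_smul hf, smul_apply, smul_eq_mul]

lemma pd_mul (i : Fin 4) (hf : DifferentiableAt ℝ f X) (hg : DifferentiableAt ℝ g X) :
    pd i (fun Y => f Y * g Y) X = pd i f X * g X + f X * pd i g X := by
  simp only [pd, fderiv_fun_mul hf hg, add_apply, smul_apply, smul_eq_mul]
  ring

lemma pd_const (i : Fin 4) (c : ℂ) (X : Fin 4 → ℝ) : pd i (fun _ => c) X = 0 := by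
  simp [pd]

lemma pd_clm (i : Fin 4) (L : (Fin 4 → ℝ) →L[ℝ] ℂ) (X : Fin 4 → ℝ) : pd i L X = L (e4 i) := by
  simp only [pd, L.fderiv]

lemma pd_coord_self (i : Fin 4) (X : Fin 4 → ℝ) : pd i (fun Y => (Y i : ℂ)) X = 1 := by
  refine (pd_clm i (Complex.ofRealCLM ∘L ContinuousLinearMap.proj i) X).trans ?_
  simp [e4]

lemma pd_comp (i : Fin 4) {F : ℂ → ℂ} (hF : DifferentiableAt ℂ F (f X))
    (hf : DifferentiableAt ℝ f X) :
    pd i (fun Y => F (f Y)) X = deriv F (f X) * pd i f X := by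
  have h := hF.hasDerivAt.comp_hasFDerivAt X hf.hasFDerivAt
  simp only [pd, ← Function.comp_def, h.fderiv, smul_apply, smul_eq_mul]

lemma pd_congr (i : Fin 4) (h : f =ᶠ[𝓝 X] g) : pd i f X = pd i g X := by
  simp only [pd, h.fderiv_eq]

lemma degOp_congr (h : f =ᶠ[𝓝 X] g) : degOp f X = degOp g X := by
  simp only [degOp, pd_congr _ h]

lemma eventually_differentiableAt (hf : ContDiffAt ℝ 2 f X) :
    ∀ᶠ Y in 𝓝 X, DifferentiableAt ℝ f Y :=
  (hf.eventually (by simp)).mono fun _ hY => hY.differentiableAt two_ne_zero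

lemma differentiableAt_pd (i : Fin 4) (hf : ContDiffAt ℝ 2 f X) : DifferentiableAt ℝ (pd i f) X :=
  ((hf.fderiv_right (m := 1) (by norm_num)).clm_apply contDiffAt_const).differentiableAt one_ne_zero

end PartialDerivatives

section DifferentialOperators

variable {f g : (Fin 4 → ℝ) → ℂ} {X : Fin 4 → ℝ}

lemma degOp_add (hf : DifferentiableAt ℝ f X) (hg : DifferentiableAt ℝ g X) :
    degOp (f + g) X = degOp f X + degOp g X := by
  simp only [degOp, pd_add _ hf hg, mul_add, Finset.sum_add_distrib]

lemma degOp_const_smul (c : ℂ) (hf : DifferentiableAt ℝ f X) :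
    degOp (c • f) X = c * degOp f X := by
  simp only [degOp, pd_const_smul _ c hf, mul_left_comm _ c, Finset.mul_sum]

lemma degOp_mul (hf : DifferentiableAt ℝ f X) (hg : DifferentiableAt ℝ g X) :
    degOp (fun Y => f Y * g Y) X = degOp f X * g X + f X * degOp g X := by
  simp only [degOp, pd_mul _ hf hg, Finset.sum_mul, Finset.mul_sum, ← Finset.sum_add_distrib]
  exact Finset.sum_congr rfl fun i _ => by ring

lemma degOp_comp {F : ℂ → ℂ} (hF : DifferentiableAt ℂ F (f X)) (hf : DifferentiableAt ℝ f X) :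
    degOp (fun Y => F (f Y)) X = deriv F (f X) * degOp f X := by
  simp only [degOp, pd_comp _ hF hf, mul_left_comm _ (deriv F (f X)), Finset.mul_sum]

lemma degOp_clm (L : (Fin 4 → ℝ) →L[ℝ] ℂ) (X : Fin 4 → ℝ) : degOp L X = L X := by
  conv_rhs => rw [← Finset.univ_sum_single X, map_sum]
  refine Finset.sum_congr rfl fun i _ => ?_
  rw [pd_clm, ← Complex.real_smul, ← map_smul, e4, ← Pi.single_smul, smul_eq_mul, mul_one]

lemma lap_add (hf : ContDiffAt ℝ 2 f X) (hg : ContDiffAt ℝ 2 g X) :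
    lap (f + g) X = lap f X + lap g X := by
  have pd_add_near (i : Fin 4) : pd i (f + g) =ᶠ[𝓝 X] pd i f + pd i g := by
    filter_upwards [eventually_differentiableAt hf, eventually_differentiableAt hg] with Y hfY hgY
    exact pd_add i hfY hgY
  simp only [lap, pd_congr _ (pd_add_near _),
    pd_add _ (differentiableAt_pd _ hf) (differentiableAt_pd _ hg), Finset.sum_add_distrib]

lemma lap_const_smul (c : ℂ) (hf : ContDiffAt ℝ 2 f X) : lap (c • f) X = c * lap f X := by
  have pd_smul_near (i : Fin 4) : pd i (c • f) =ᶠ[𝓝 X] c • pd i f := by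
    filter_upwards [eventually_differentiableAt hf] with Y hY
    exact pd_const_smul i c hY
  simp only [lap, pd_congr _ (pd_smul_near _), pd_const_smul _ c (differentiableAt_pd _ hf),
    Finset.mul_sum]

lemma lap_mul (hf : ContDiffAt ℝ 2 f X) (hg : ContDiffAt ℝ 2 g X) :
    lap (fun Y => f Y * g Y) X
      = lap f X * g X + 2 * ∑ i, pd i f X * pd i g X + f X * lap g X := by
  have pd_mul_near (i : Fin 4) : pd i (fun Y => f Y * g Y) =ᶠ[𝓝 X]
      (fun Y => pd i f Y * g Y) + fun Y => f Y * pd i g Y := by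
    filter_upwards [eventually_differentiableAt hf, eventually_differentiableAt hg] with Y hfY hgY
    exact pd_mul i hfY hgY
  have df := hf.differentiableAt two_ne_zero
  have dg := hg.differentiableAt two_ne_zero
  have pd_pd_mul (i : Fin 4) : pd i (pd i fun Y => f Y * g Y) X
      = pd i (pd i f) X * g X + 2 * (pd i f X * pd i g X) + f X * pd i (pd i g) X := by
    have dpf := differentiableAt_pd i hf
    have dpg := differentiableAt_pd i hg
    rw [pd_congr i (pd_mul_near i), pd_add i (dpf.fun_mul dg) (df.fun_mul dpg), pd_mul i dpf dg,
      pd_mul i df dpg]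
    ring
  simp only [lap, pd_pd_mul, Finset.sum_add_distrib, Finset.sum_mul, Finset.mul_sum]

lemma lap_comp {F : ℂ → ℂ} (hF : AnalyticAt ℂ F (f X)) (hf : ContDiffAt ℝ 2 f X) :
    lap (fun Y => F (f Y)) X
      = deriv (deriv F) (f X) * ∑ i, pd i f X ^ 2 + deriv F (f X) * lap f X := by
  have pd_comp_near (i : Fin 4) :
      pd i (fun Y => F (f Y)) =ᶠ[𝓝 X] fun Y => deriv F (f Y) * pd i f Y := by
    filter_upwards [hf.continuousAt.eventually hF.eventually_analyticAt,
      eventually_differentiableAt hf] with Y hFY hfY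
    exact pd_comp i hFY.differentiableAt hfY
  have df := hf.differentiableAt two_ne_zero
  have dF' := hF.deriv.differentiableAt
  have pd_pd_comp (i : Fin 4) : pd i (pd i fun Y => F (f Y)) X
      = deriv (deriv F) (f X) * pd i f X ^ 2 + deriv F (f X) * pd i (pd i f) X := by
    rw [pd_congr i (pd_comp_near i),
      pd_mul i ((dF'.restrictScalars ℝ).fun_comp' X df) (differentiableAt_pd i hf),
      pd_comp i dF' df]
    ring
  simp only [lap, pd_pd_comp, Finset.sum_add_distrib, Finset.mul_sum]

lemma lap_clm (L : (Fin 4 → ℝ) →L[ℝ] ℂ) (X : Fin 4 → ℝ) : lap L X = 0 := by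
  have pd_L (i : Fin 4) : pd i L = fun _ => L (e4 i) := funext (pd_clm i L)
  simp only [lap, pd_L, pd_const, Finset.sum_const_zero]

end DifferentialOperators

section SolidHarmonics

/-- The space of solid harmonics of degree `p`: the twice continuously differentiable harmonic
functions on `ℝ⁴` that are homogeneous of degree `p`, homogeneity being expressed by Euler's
equation `deg f = p f`. -/
def solidHarmonics (p : ℕ) : Submodule ℂ ((Fin 4 → ℝ) → ℂ) where
  carrier := {f | ContDiff ℝ 2 f ∧ lap f = 0 ∧ degOp f = (p : ℂ) • f}
  zero_mem' := by
    have pd_zero (i : Fin 4) : pd i 0 = 0 := funext (pd_const i 0)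
    refine ⟨contDiff_const, ?_, ?_⟩ <;> ext X <;> simp [lap, degOp, pd_zero]
  add_mem' := by
    rintro f g ⟨cf, lf, df⟩ ⟨cg, lg, dg⟩
    refine ⟨cf.add cg, ?_, ?_⟩ <;> ext X
    · simp [lap_add cf.contDiffAt cg.contDiffAt, lf, lg]
    · simp [degOp_add (cf.differentiable two_ne_zero X) (cg.differentiable two_ne_zero X), df, dg,
        mul_add]
  smul_mem' := by
    rintro c f ⟨cf, lf, df⟩
    refine ⟨cf.const_smul c, ?_, ?_⟩ <;> ext X
    · simp [lap_const_smul c cf.contDiffAt, lf]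
    · simp [degOp_const_smul c (cf.differentiable two_ne_zero X), df, mul_left_comm]

lemma clm_pow_mem_solidHarmonics {L : (Fin 4 → ℝ) →L[ℝ] ℂ} (hL : ∑ i, L (e4 i) ^ 2 = 0) (a : ℕ) :
    (fun X => L X ^ a) ∈ solidHarmonics a := by
  refine ⟨L.contDiff.pow a, ?_, ?_⟩ <;> ext X
  · simp [lap_comp (F := fun z => z ^ a) (by fun_prop) L.contDiff.contDiffAt, pd_clm, hL, lap_clm]
  · rw [degOp_comp (F := fun z => z ^ a) (by fun_prop) L.differentiableAt, degOp_clm,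
      deriv_pow_field, Pi.smul_apply, smul_eq_mul]
    cases a with
    | zero => simp
    | succ a => rw [Nat.add_sub_cancel, mul_assoc, ← pow_succ]

lemma mul_mem_solidHarmonics {p q : ℕ} {f g : (Fin 4 → ℝ) → ℂ} (hf : f ∈ solidHarmonics p)
    (hg : g ∈ solidHarmonics q) (hfg : ∀ X, ∑ i, pd i f X * pd i g X = 0) :
    (fun X => f X * g X) ∈ solidHarmonics (p + q) := by
  obtain ⟨cf, lf, df⟩ := hf
  obtain ⟨cg, lg, dg⟩ := hg
  refine ⟨cf.mul cg, ?_, ?_⟩ <;> ext X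
  · simp [lap_mul cf.contDiffAt cg.contDiffAt, lf, lg, hfg]
  · simp only [degOp_mul (cf.differentiable two_ne_zero X) (cg.differentiable two_ne_zero X),
      df, dg, Pi.smul_apply, smul_eq_mul, Nat.cast_add]
    ring

lemma clm_pow_mul_clm_pow_mem_solidHarmonics {L M : (Fin 4 → ℝ) →L[ℝ] ℂ}
    (hL : ∑ i, L (e4 i) ^ 2 = 0) (hM : ∑ i, M (e4 i) ^ 2 = 0)
    (hLM : ∑ i, L (e4 i) * M (e4 i) = 0) (a c : ℕ) :
    (fun X => L X ^ a * M X ^ c) ∈ solidHarmonics (a + c) := by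
  refine mul_mem_solidHarmonics (clm_pow_mem_solidHarmonics hL a)
    (clm_pow_mem_solidHarmonics hM c) fun X => ?_
  have pd_pow (N : (Fin 4 → ℝ) →L[ℝ] ℂ) (k : ℕ) (i : Fin 4) :
      pd i (fun Y => N Y ^ k) X = k * N X ^ (k - 1) * N (e4 i) := by
    rw [pd_comp (F := fun z => z ^ k) i (by fun_prop) N.differentiableAt, pd_clm, deriv_pow_field]
  simp only [pd_pow, mul_mul_mul_comm _ (L (e4 _)), ← Finset.mul_sum, hLM, mul_zero]

end SolidHarmonics

section MatrixCoefficients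

/-- The linear form `X ↦ z₁ⱼ s + z₂ⱼ` in the `j`-th column of `Z(X)`. Its powers are the factors
of the generating polynomial of the coefficients `t^l_{n m̲}`, evaluated at `s`. -/
def columnForm (s : ℂ) (j : Fin 2) : (Fin 4 → ℝ) →L[ℝ] ℂ :=
  LinearMap.toContinuousLinearMap
    { toFun := fun X => Zmat (fun i => (X i : ℂ)) 0 j * s + Zmat (fun i => (X i : ℂ)) 1 j
      map_add' := fun X Y => by fin_cases j <;> simp [Zmat] <;> ring
      map_smul' := fun c X => by fin_cases j <;> simp [Zmat] <;> ring }

lemma columnForm_apply (s : ℂ) (j : Fin 2) (X : Fin 4 → ℝ) :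
    columnForm s j X = Zmat (fun i => (X i : ℂ)) 0 j * s + Zmat (fun i => (X i : ℂ)) 1 j :=
  rfl

lemma sum_columnForm_mul_columnForm (s : ℂ) (j k : Fin 2) :
    ∑ i, columnForm s j (e4 i) * columnForm s k (e4 i) = 0 := by
  fin_cases j <;> fin_cases k <;>
    simp [columnForm_apply, Zmat, e4, Fin.sum_univ_four, Pi.single_apply] <;>
    ring_nf <;> simp

open Polynomial in
lemma exists_coeff_eq_sum_eval {F : Type*} [Field F] [CharZero F] (p b : ℕ) :
    ∃ w : ℕ → F, ∀ q : F[X], q.natDegree ≤ p →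
      q.coeff b = ∑ j ∈ Finset.range (p + 1), w j * q.eval (j : F) := by
  refine ⟨fun j => (Lagrange.basis (Finset.range (p + 1)) (Nat.cast : ℕ → F) j).coeff b,
    fun q hq => ?_⟩
  have degree_lt : q.degree < (Finset.range (p + 1)).card := by
    rw [Finset.card_range]
    exact (degree_le_of_natDegree_le hq).trans_lt (by exact_mod_cast p.lt_succ_self)
  conv_lhs => rw [Lagrange.eq_interpolate Nat.cast_injective.injOn degree_lt]
  simp [Lagrange.interpolate_apply, mul_comm]

open Polynomial in
lemma tcoefR_mem_solidHarmonics {p a : ℕ} (ha : a ≤ p) (b : ℕ) :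
    tcoefR p a b ∈ solidHarmonics p := by
  obtain ⟨w, hw⟩ := exists_coeff_eq_sum_eval (F := ℂ) p b
  have tcoefR_eq : tcoefR p a b = ∑ j ∈ Finset.range (p + 1),
      w j • fun X => columnForm j 0 X ^ a * columnForm j 1 X ^ (p - a) := by
    ext X
    rw [tcoefR, tcoef, hw]
    · simp [columnForm_apply]
    · refine (natDegree_mul_le.trans (add_le_add (natDegree_pow_le_of_le a natDegree_linear_le)
        (natDegree_pow_le_of_le (p - a) natDegree_linear_le))).trans ?_
      omega
  rw [tcoefR_eq]
  refine Submodule.sum_mem _ fun j _ => Submodule.smul_mem _ _ ?_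
  have h := sum_columnForm_mul_columnForm j
  simpa only [Nat.add_sub_cancel' ha] using clm_pow_mul_clm_pow_mem_solidHarmonics
    (by simpa only [sq] using h 0 0) (by simpa only [sq] using h 1 1) (h 0 1) a (p - a)

end MatrixCoefficients

section HyperboloidHeight

/-- The function `r = (1 + μ²N)^{1/2}`, i.e. the last coordinate of the point `(μX, r)` of the
hyperboloid `r² - N(μX) = 1` over `X`. It is complex-valued so that holomorphic functions can be
applied to it. -/
def hyperboloidHeight (μ : ℝ) (X : Fin 4 → ℝ) : ℂ := (√(1 + μ ^ 2 * Nq X) : ℝ)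

variable (μ : ℝ) (X : Fin 4 → ℝ)

lemma Nq_nonneg : 0 ≤ Nq X := Finset.sum_nonneg fun i _ => sq_nonneg (X i)

lemma one_add_sq_mul_Nq_pos : 0 < 1 + μ ^ 2 * Nq X := by
  have := Nq_nonneg X
  positivity

lemma hyperboloidHeight_sq : hyperboloidHeight μ X ^ 2 = 1 + μ ^ 2 * Nq X := by
  rw [hyperboloidHeight, ← Complex.ofReal_pow, Real.sq_sqrt (one_add_sq_mul_Nq_pos μ X).le]
  push_cast
  rfl

lemma hyperboloidHeight_ne_zero : hyperboloidHeight μ X ≠ 0 :=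
  Complex.ofReal_ne_zero.2 (Real.sqrt_pos.2 (one_add_sq_mul_Nq_pos μ X)).ne'

lemma hyperboloidHeight_add_one_ne_zero : hyperboloidHeight μ X + 1 ≠ 0 := by
  rw [hyperboloidHeight]
  exact_mod_cast (by positivity : √(1 + μ ^ 2 * Nq X) + 1 ≠ 0)

variable {μ X} in
lemma hyperboloidHeight_sub_one_ne_zero (hμ : μ ≠ 0) (hX : X ≠ 0) :
    hyperboloidHeight μ X - 1 ≠ 0 := by
  intro h
  have mul_Nq_eq_zero : (μ : ℂ) ^ 2 * Nq X = 0 := by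
    linear_combination (hyperboloidHeight μ X + 1) * h - hyperboloidHeight_sq μ X
  have Nq_eq_zero : Nq X = 0 := by simpa [hμ] using mul_Nq_eq_zero
  rw [Nq, Finset.sum_eq_zero_iff_of_nonneg fun i _ => sq_nonneg (X i)] at Nq_eq_zero
  exact hX (funext fun i => by simpa using Nq_eq_zero i (Finset.mem_univ i))

lemma contDiff_hyperboloidHeight : ContDiff ℝ 2 (hyperboloidHeight μ) := by
  have radicand : ContDiff ℝ 2 fun Y => 1 + μ ^ 2 * Nq Y := by
    unfold Nq
    fun_prop
  exact Complex.ofRealCLM.contDiff.comp (radicand.sqrt fun Y => (one_add_sq_mul_Nq_pos μ Y).ne')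

lemma differentiableAt_hyperboloidHeight : DifferentiableAt ℝ (hyperboloidHeight μ) X :=
  (contDiff_hyperboloidHeight μ).differentiable two_ne_zero X

lemma contDiff_ofReal_Nq : ContDiff ℝ 2 fun Y => (Nq Y : ℂ) := by
  have contDiff_Nq : ContDiff ℝ 2 Nq := by
    unfold Nq
    fun_prop
  exact Complex.ofRealCLM.contDiff.comp contDiff_Nq

lemma pd_ofReal_Nq (i : Fin 4) : pd i (fun Y => (Nq Y : ℂ)) X = 2 * X i := by
  have hasFDerivAt_Nq : HasFDerivAt Nq (∑ j, (2 * X j) • ContinuousLinearMap.proj j) X :=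
    HasFDerivAt.fun_sum fun j _ => by simpa using (hasFDerivAt_apply (𝕜 := ℝ) j X).pow 2
  have h := Complex.ofRealCLM.hasFDerivAt.comp X hasFDerivAt_Nq
  refine (congrArg (· (e4 i)) h.fderiv).trans ?_
  simp [e4, Pi.single_apply]

lemma lap_ofReal_Nq : lap (fun Y => (Nq Y : ℂ)) X = 8 := by
  have pd_Nq (i : Fin 4) : pd i (fun Y => (Nq Y : ℂ)) = (2 : ℂ) • fun Y => (Y i : ℂ) :=
    funext fun Y => pd_ofReal_Nq Y i
  have pd_pd_Nq (i : Fin 4) : pd i (pd i fun Y => (Nq Y : ℂ)) X = 2 := by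
    rw [pd_Nq, pd_const_smul i 2 (by fun_prop), pd_coord_self, mul_one]
  norm_num [lap, pd_pd_Nq]

lemma hyperboloidHeight_mul_self :
    (fun Y => hyperboloidHeight μ Y * hyperboloidHeight μ Y)
      = fun Y => 1 + (μ : ℂ) ^ 2 * (Nq Y : ℂ) :=
  funext fun Y => by rw [← sq, hyperboloidHeight_sq]

lemma pd_hyperboloidHeight (i : Fin 4) :
    pd i (hyperboloidHeight μ) X = μ ^ 2 * X i / hyperboloidHeight μ X := by
  have dr := differentiableAt_hyperboloidHeight μ X
  have pd_sq : 2 * hyperboloidHeight μ X * pd i (hyperboloidHeight μ) X = μ ^ 2 * (2 * X i) :=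
    calc 2 * hyperboloidHeight μ X * pd i (hyperboloidHeight μ) X
        = pd i (fun Y => hyperboloidHeight μ Y * hyperboloidHeight μ Y) X := by
          rw [pd_mul i dr dr]
          ring
      _ = μ ^ 2 * (2 * X i) := by
          rw [hyperboloidHeight_mul_self,
            pd_comp (F := fun z => 1 + (μ : ℂ) ^ 2 * z) i (by fun_prop)
              (contDiff_ofReal_Nq.differentiable two_ne_zero X), pd_ofReal_Nq]
          simp
  rw [eq_div_iff (hyperboloidHeight_ne_zero μ X)]
  linear_combination pd_sq / 2

lemma sum_mul_pd_hyperboloidHeight (v : Fin 4 → ℂ) :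
    ∑ i, v i * pd i (hyperboloidHeight μ) X
      = μ ^ 2 / hyperboloidHeight μ X * ∑ i, X i * v i := by
  simp only [pd_hyperboloidHeight, Finset.mul_sum]
  exact Finset.sum_congr rfl fun i _ => by ring

lemma degOp_hyperboloidHeight :
    degOp (hyperboloidHeight μ) X = hyperboloidHeight μ X - (hyperboloidHeight μ X)⁻¹ := by
  have r_ne := hyperboloidHeight_ne_zero μ X
  have sum_coord_sq : ∑ i, (X i : ℂ) * X i = Nq X := by simp [Nq, sq]
  rw [degOp, sum_mul_pd_hyperboloidHeight, sum_coord_sq]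
  field_simp
  linear_combination -hyperboloidHeight_sq μ X

lemma sum_pd_hyperboloidHeight_sq :
    ∑ i, pd i (hyperboloidHeight μ) X ^ 2 = μ ^ 2 * (1 - (hyperboloidHeight μ X)⁻¹ ^ 2) := by
  have r_ne := hyperboloidHeight_ne_zero μ X
  simp only [sq (pd _ _ _)]
  rw [sum_mul_pd_hyperboloidHeight, ← degOp.eq_def, degOp_hyperboloidHeight]
  field_simp

lemma lap_hyperboloidHeight :
    lap (hyperboloidHeight μ) X
      = μ ^ 2 * (3 * (hyperboloidHeight μ X)⁻¹ + (hyperboloidHeight μ X)⁻¹ ^ 3) := by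
  have cr := (contDiff_hyperboloidHeight μ).contDiffAt (x := X)
  have lap_sq : 2 * hyperboloidHeight μ X * lap (hyperboloidHeight μ) X
      + 2 * ∑ i, pd i (hyperboloidHeight μ) X ^ 2 = μ ^ 2 * 8 :=
    calc _ = lap (fun Y => hyperboloidHeight μ Y * hyperboloidHeight μ Y) X := by
          simp only [lap_mul cr cr, sq]
          ring
      _ = μ ^ 2 * 8 := by
          rw [hyperboloidHeight_mul_self,
            lap_comp (F := fun z => 1 + (μ : ℂ) ^ 2 * z) (by fun_prop)
              contDiff_ofReal_Nq.contDiffAt, lap_ofReal_Nq]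
          simp
  rw [sum_pd_hyperboloidHeight_sq] at lap_sq
  have r_ne := hyperboloidHeight_ne_zero μ X
  field_simp at lap_sq ⊢
  linear_combination lap_sq / 2

end HyperboloidHeight

section RadialOperators

/-- The action of `deg` on the factor `g` of `T · g(r)`, where `T` is homogeneous of degree `c` and
`r = (1 + μ²N)^{1/2}`. -/
def radialDegOp (c : ℂ) (g : ℂ → ℂ) (z : ℂ) : ℂ := c * g z + (z - z⁻¹) * deriv g z

/-- The action of `μ⁻²□` on the factor `g` of `T · g(r)`, where `T` is harmonic and homogeneous of
degree `c` and `r = (1 + μ²N)^{1/2}`. -/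
def radialLap (c : ℂ) (g : ℂ → ℂ) (z : ℂ) : ℂ :=
  (1 - z⁻¹ ^ 2) * deriv (deriv g) z + ((2 * c + 3) * z⁻¹ + z⁻¹ ^ 3) * deriv g z

/-- The action of `μ⁻²□̃_μ` on the factor `g` of `T · g(r)`, where `T` is harmonic and homogeneous
of degree `c` and `r = (1 + μ²N)^{1/2}`: a Gegenbauer operator. -/
def radialBoxTilde (c : ℂ) (g : ℂ → ℂ) (z : ℂ) : ℂ :=
  (z ^ 2 - 1) * deriv (deriv g) z + 2 * (c + 2) * z * deriv g z + (c + 1) * (c + 2) * g z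

variable {c : ℂ} {g : ℂ → ℂ} {z : ℂ}

lemma analyticAt_radialDegOp (hg : AnalyticAt ℂ g z) (hz : z ≠ 0) :
    AnalyticAt ℂ (radialDegOp c g) z :=
  (analyticAt_const.mul hg).add ((analyticAt_id.sub (analyticAt_inv hz)).mul hg.deriv)

lemma deriv_radialDegOp (hg : AnalyticAt ℂ g z) (hz : z ≠ 0) :
    deriv (radialDegOp c g) z
      = (c + 1 + z⁻¹ ^ 2) * deriv g z + (z - z⁻¹) * deriv (deriv g) z := by
  have hasDerivAt_sub_inv := (hasDerivAt_id' z).fun_sub (hasDerivAt_inv hz)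
  have h : HasDerivAt (radialDegOp c g) _ z :=
    (hg.differentiableAt.hasDerivAt.const_mul c).fun_add
      (hasDerivAt_sub_inv.fun_mul hg.deriv.differentiableAt.hasDerivAt)
  rw [h.deriv]
  ring

lemma radialLap_add_radialDegOp (hg : AnalyticAt ℂ g z) (hz : z ≠ 0) :
    radialLap c g z + (radialDegOp c (radialDegOp c g) z + 3 * radialDegOp c g z + 2 * g z)
      = radialBoxTilde c g z := by
  rw [radialDegOp, deriv_radialDegOp hg hz, radialDegOp, radialLap, radialBoxTilde]
  field_simp
  ring

end RadialOperators

section ConformalLaplacian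

variable {μ : ℝ} {c : ℂ} {T : (Fin 4 → ℝ) → ℂ} {g : ℂ → ℂ} {X : Fin 4 → ℝ}

lemma contDiffAt_comp_hyperboloidHeight (hg : AnalyticAt ℂ g (hyperboloidHeight μ X)) :
    ContDiffAt ℝ 2 (fun Y => g (hyperboloidHeight μ Y)) X :=
  (hg.contDiffAt.restrict_scalars ℝ).comp X (contDiff_hyperboloidHeight μ).contDiffAt

lemma degOp_mul_comp_hyperboloidHeight (hT : DifferentiableAt ℝ T X) (hdeg : degOp T X = c * T X)
    (hg : AnalyticAt ℂ g (hyperboloidHeight μ X)) :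
    degOp (fun Y => T Y * g (hyperboloidHeight μ Y)) X
      = T X * radialDegOp c g (hyperboloidHeight μ X) := by
  rw [degOp_mul hT ((contDiffAt_comp_hyperboloidHeight hg).differentiableAt two_ne_zero),
    degOp_comp hg.differentiableAt (differentiableAt_hyperboloidHeight μ X),
    degOp_hyperboloidHeight, hdeg, radialDegOp]
  ring

lemma degOp_degOp_mul_comp_hyperboloidHeight (hT : ContDiffAt ℝ 2 T X)
    (hdeg : ∀ᶠ Y in 𝓝 X, degOp T Y = c * T Y) (hg : AnalyticAt ℂ g (hyperboloidHeight μ X)) :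
    degOp (degOp fun Y => T Y * g (hyperboloidHeight μ Y)) X
      = T X * radialDegOp c (radialDegOp c g) (hyperboloidHeight μ X) := by
  have degOp_near : (degOp fun Y => T Y * g (hyperboloidHeight μ Y)) =ᶠ[𝓝 X]
      fun Y => T Y * radialDegOp c g (hyperboloidHeight μ Y) := by
    have cr := (contDiff_hyperboloidHeight μ).continuous.continuousAt (x := X)
    filter_upwards [eventually_differentiableAt hT, hdeg, cr.eventually hg.eventually_analyticAt]
      with Y hTY hdegY hgY
    exact degOp_mul_comp_hyperboloidHeight hTY hdegY hgY
  rw [degOp_congr degOp_near, degOp_mul_comp_hyperboloidHeight (hT.differentiableAt two_ne_zero)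
    hdeg.self_of_nhds (analyticAt_radialDegOp hg (hyperboloidHeight_ne_zero μ X))]

lemma lap_mul_comp_hyperboloidHeight (hT : ContDiffAt ℝ 2 T X) (hlap : lap T X = 0)
    (hdeg : degOp T X = c * T X) (hg : AnalyticAt ℂ g (hyperboloidHeight μ X)) :
    lap (fun Y => T Y * g (hyperboloidHeight μ Y)) X
      = μ ^ 2 * (T X * radialLap c g (hyperboloidHeight μ X)) := by
  have cross_term : ∑ i, pd i T X * pd i (fun Y => g (hyperboloidHeight μ Y)) X
      = deriv g (hyperboloidHeight μ X) * (μ ^ 2 / hyperboloidHeight μ X * (c * T X)) := by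
    rw [← hdeg, degOp, ← sum_mul_pd_hyperboloidHeight, Finset.mul_sum]
    refine Finset.sum_congr rfl fun i _ => ?_
    rw [pd_comp i hg.differentiableAt (differentiableAt_hyperboloidHeight μ X)]
    ring
  rw [lap_mul hT (contDiffAt_comp_hyperboloidHeight hg), cross_term, hlap,
    lap_comp hg (contDiff_hyperboloidHeight μ).contDiffAt, sum_pd_hyperboloidHeight_sq,
    lap_hyperboloidHeight, radialLap]
  ring

lemma boxTilde_mul_comp_hyperboloidHeight (hT : ContDiffAt ℝ 2 T X) (hlap : lap T X = 0)
    (hdeg : ∀ᶠ Y in 𝓝 X, degOp T Y = c * T Y) (hg : AnalyticAt ℂ g (hyperboloidHeight μ X)) :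
    boxTilde μ (fun Y => T Y * g (hyperboloidHeight μ Y)) X
      = μ ^ 2 * T X * radialBoxTilde c g (hyperboloidHeight μ X) := by
  rw [boxTilde, lap_mul_comp_hyperboloidHeight hT hlap hdeg.self_of_nhds hg,
    degOp_degOp_mul_comp_hyperboloidHeight hT hdeg hg,
    degOp_mul_comp_hyperboloidHeight (hT.differentiableAt two_ne_zero) hdeg.self_of_nhds hg,
    ← radialLap_add_radialDegOp hg (hyperboloidHeight_ne_zero μ X)]
  push_cast
  ring

end ConformalLaplacian

section Solutions

variable {μ : ℝ} {T : (Fin 4 → ℝ) → ℂ} {X : Fin 4 → ℝ}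

lemma deriv_add_const_zpow (ε : ℂ) (n : ℤ) :
    deriv (fun z : ℂ => (z + ε) ^ n) = fun z => (n : ℂ) * (z + ε) ^ (n - 1) := by
  ext z
  rw [deriv_comp_add_const (fun w : ℂ => w ^ n), deriv_zpow]

lemma radialBoxTilde_add_const_zpow {ε z : ℂ} (hε : ε ^ 2 = 1) (hz : z + ε ≠ 0) (k : ℤ) :
    radialBoxTilde k (fun w => (w + ε) ^ (-(k + 1))) z = 0 := by
  simp only [radialBoxTilde, deriv_add_const_zpow, deriv_const_mul_field']
  have zpow_pred : (z + ε) ^ (-(k + 1) - 1) = (z + ε) ^ (-(k + 1)) / (z + ε) :=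
    zpow_sub_one₀ hz _
  have zpow_pred_pred : (z + ε) ^ (-(k + 1) - 1 - 1) = (z + ε) ^ (-(k + 1)) / (z + ε) ^ 2 := by
    rw [zpow_sub_one₀ hz, zpow_pred]
    field_simp
  rw [zpow_pred, zpow_pred_pred]
  push_cast
  field_simp
  linear_combination (z + ε) ^ (-(k + 1)) * ((k : ℂ) + 1) * (k + 2) * hε

lemma boxTilde_div_hyperboloidHeight_add_pow {p : ℕ} (hT : T ∈ solidHarmonics p) {ε : ℂ}
    (hε : ε ^ 2 = 1) (hX : hyperboloidHeight μ X + ε ≠ 0) :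
    boxTilde μ (fun Y => T Y / (hyperboloidHeight μ Y + ε) ^ (p + 1)) X = 0 := by
  obtain ⟨hT, hlap, hdeg⟩ := hT
  have div_eq_mul_zpow : (fun Y => T Y / (hyperboloidHeight μ Y + ε) ^ (p + 1))
      = fun Y => T Y * (fun z => (z + ε) ^ (-((p : ℤ) + 1))) (hyperboloidHeight μ Y) := by
    ext Y
    simp only [div_eq_mul_inv, zpow_neg]
    norm_cast
  have hg : AnalyticAt ℂ (fun z => (z + ε) ^ (-((p : ℤ) + 1))) (hyperboloidHeight μ X) :=
    (analyticAt_id.add analyticAt_const).fun_zpow hX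
  have ode := radialBoxTilde_add_const_zpow hε hX p
  rw [Int.cast_natCast] at ode
  rw [div_eq_mul_zpow, boxTilde_mul_comp_hyperboloidHeight hT.contDiffAt (congrFun hlap X)
    (.of_forall (congrFun hdeg)) hg, ode, mul_zero]

end Solutions

/-- For `μ > 0`, `l ∈ {0,1/2,1,…}` (encoded `p = 2l`) and `m,n ∈ {−l,…,l}` (encoded
`a = l−m ≤ p`, `b = l−n ≤ p`), the function `φ⁺(X) = t^l_{n m̲}(X)/((1+μ²N(X))^{1/2}+1)^{2l+1}`
satisfies `□̃_μφ⁺ = 0` on `ℝ⁴`, and `φ⁻(X) = t^l_{n m̲}(X)/((1+μ²N(X))^{1/2}−1)^{2l+1}`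
satisfies `□̃_μφ⁻ = 0` on `ℝ⁴ ∖ {0}`. -/
theorem stmt7 (μ : ℝ) (hμ : 0 < μ) (p a b : ℕ) (ha : a ≤ p) (hb : b ≤ p) :
    (∀ X : Fin 4 → ℝ,
      boxTilde μ
        (fun Y => tcoefR p a b Y / ((Real.sqrt (1 + μ ^ 2 * Nq Y) + 1 : ℝ) : ℂ) ^ (p + 1))
        X = 0) ∧
    (∀ X : Fin 4 → ℝ, X ≠ 0 →
      boxTilde μ
        (fun Y => tcoefR p a b Y / ((Real.sqrt (1 + μ ^ 2 * Nq Y) - 1 : ℝ) : ℂ) ^ (p + 1))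
        X = 0) := by
  have hT := tcoefR_mem_solidHarmonics ha b
  refine ⟨fun X => ?_, fun X hX => ?_⟩
  · have h := boxTilde_div_hyperboloidHeight_add_pow hT (one_pow 2)
      (hyperboloidHeight_add_one_ne_zero μ X)
    simpa [hyperboloidHeight] using h
  · have r_ne_one := hyperboloidHeight_sub_one_ne_zero hμ.ne' hX
    rw [sub_eq_add_neg] at r_ne_one
    have h := boxTilde_div_hyperboloidHeight_add_pow hT neg_one_sq r_ne_one
    simpa [hyperboloidHeight, sub_eq_add_neg] using h
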